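/- Let F be a finite field of characteristic p > 5 with |F| = q ≡ −7 or −13 (mod 30), and G = C_3 × D_10. Then FG ≅ F² ⊕ F₂² ⊕ M₂(F₂)³ as F-algebras, where F₂ is the quadratic extension of F. -/

import Mathlib

/-!
A group algebra of a product is an iterated group algebra, so `F[C₃ × D₁₀] ≃ F[C₃][D₁₀]`. Since
`3 ∤ q - 1`, a primitive cube root of unity `ω` generates the quadratic extension `K` of `F`, and
`F[C₃] ≃ F × K`; hence `F[C₃ × D₁₀] ≃ F[D₁₀] × K[D₁₀]`.

Let `α ^ 2 + α = 1`, so that `α = ζ + ζ⁻¹` for a primitive fifth root of unity `ζ`. The dihedral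
group acts on a plane by a rotation of trace `α`, and the image of its group algebra consists of
all `2 × 2` matrices over the algebra generated by `α`. As `5 ∤ q ^ 2 - 1`, the root `ζ` is not in
`K`, so `α` is not in `F`: it generates `K` over `F`, which gives `F[D₁₀] ≃ F² × M₂(K)`. Over `K`
both roots of `X ^ 2 + X - 1` are available and the matrix factor splits in two,
`K[D₁₀] ≃ K² × M₂(K)²`.

In each case the map from the group algebra is surjective, because the average over the cyclic
subgroup separates the one-dimensional representations from the others, and dimensions agree.
-/

open MonoidAlgebra Multiplicative Finset

section Algebra

lemma prod_surjective_of_map_eq_one_of_map_eq_zero {k A B C : Type*} [CommSemiring k] [Ring A]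
    [Algebra k A] [Ring B] [Algebra k B] [Ring C] [Algebra k C] {f : A →ₐ[k] B} {g : A →ₐ[k] C}
    (hf : Function.Surjective f) (hg : Function.Surjective g) {e : A}
    (hfe : f e = 1) (hge : g e = 0) : Function.Surjective (f.prod g) := by
  rintro ⟨b, c⟩
  obtain ⟨x, rfl⟩ := hf b
  obtain ⟨y, rfl⟩ := hg c
  exact ⟨x * e + y * (1 - e), by simp [hfe, hge]⟩

variable {k A B C : Type*} [Field k] [Ring A] [Algebra k A] [Ring B] [Algebra k B]
  [Ring C] [Algebra k C]

lemma prod_surjective_of_geom_sum_eq_zero {f : A →ₐ[k] B} {g : A →ₐ[k] C}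
    (hf : Function.Surjective f) (hg : Function.Surjective g) {n : ℕ} (hn : (n : k) ≠ 0) {c : A}
    (hfc : f c = 1) (hgc : ∑ i ∈ range n, g c ^ i = 0) : Function.Surjective (f.prod g) := by
  refine prod_surjective_of_map_eq_one_of_map_eq_zero hf hg
    (e := (n : k)⁻¹ • ∑ i ∈ range n, c ^ i) ?_ ?_
  · have hnsmul : (n : B) = (n : k) • 1 := by rw [Nat.cast_smul_eq_nsmul, nsmul_one]
    simp [hfc, hnsmul, smul_smul, hn]
  · simp [hgc]

lemma nonempty_algEquiv_of_surjective [Module.Finite k A] {f : A →ₐ[k] B}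
    (hf : Function.Surjective f) (h : Module.finrank k A = Module.finrank k B) :
    Nonempty (A ≃ₐ[k] B) :=
  have : Module.Finite k B := .of_surjective f.toLinearMap hf
  ⟨.ofBijective f (OrzechProperty.bijective_of_surjective_of_finrank_le f.toLinearMap hf h.le)⟩

lemma adjoin_singleton_eq_top_of_injective {ι : Type*} [Finite ι] {x : ι → k}
    (hx : Function.Injective x) : Algebra.adjoin k {x} = ⊤ := by
  rw [Algebra.adjoin_singleton_eq_range_aeval, AlgHom.range_eq_top]
  intro y
  obtain ⟨P, hP⟩ := (Polynomial.exists_eval_eq_iff x y).mpr fun i j hij ↦ congrArg y (hx hij)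
  refine ⟨P, funext fun i ↦ ?_⟩
  rw [← hP i, Polynomial.aeval_pi_apply₂]
  simp

lemma adjoin_singleton_eq_top_of_finrank_prime {K : Type*} [Field K] [Algebra k K]
    (hK : (Module.finrank k K).Prime) {x : K} (hx : x ∉ (⊥ : Subalgebra k K)) :
    Algebra.adjoin k {x} = ⊤ :=
  have := Subalgebra.isSimpleOrder_of_finrank_prime k K hK
  (eq_bot_or_eq_top _).resolve_left fun h ↦ hx (h ▸ Algebra.self_mem_adjoin_singleton k x)

end Algebra

section MonoidAlgebra

lemma lift_surjective_of_adjoin_eq_top {k A G : Type*} [CommSemiring k] [Semiring A] [Algebra k A]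
    [Monoid G] {φ : G →* A} {s : Set A} (hs : Algebra.adjoin k s = ⊤) (hφ : s ⊆ Set.range φ) :
    Function.Surjective (MonoidAlgebra.lift k A G φ) := by
  rw [← AlgHom.range_eq_top, eq_top_iff, ← hs, Algebra.adjoin_le_iff]
  intro a ha
  obtain ⟨g, rfl⟩ := hφ ha
  exact ⟨of k G g, lift_of φ g⟩

lemma finrank_monoidAlgebra (k G : Type*) [Ring k] [StrongRankCondition k] [Finite G] :
    Module.finrank k k[G] = Nat.card G := by
  have := Fintype.ofFinite G
  rw [(coeffLinearEquiv k).finrank_eq, Module.finrank_finsupp_self, Nat.card_eq_fintype_card]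

lemma nonempty_monoidAlgebra_prod_algEquiv (k A B G : Type*) [CommSemiring k] [Ring A]
    [Algebra k A] [Ring B] [Algebra k B] [Monoid G] : Nonempty ((A × B)[G] ≃ₐ[k] A[G] × B[G]) := by
  let Φ := (mapAlgHom G (AlgHom.fst k A B)).prod (mapAlgHom G (AlgHom.snd k A B))
  have hinj : Function.Injective Φ := fun x y hxy ↦ by
    ext g
    · simpa [Φ] using congrArg (fun z ↦ z.1.coeff g) hxy
    · simpa [Φ] using congrArg (fun z ↦ z.2.coeff g) hxy
  have hsurj : Function.Surjective Φ :=
    prod_surjective_of_map_eq_one_of_map_eq_zero (e := single 1 (1, 0))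
      (map_surjective (AddMonoidHom.fst A B) Prod.fst_surjective)
      (map_surjective (AddMonoidHom.snd A B) Prod.snd_surjective)
      (by simp [one_def]) (by simp)
  exact ⟨.ofBijective Φ ⟨hinj, hsurj⟩⟩

end MonoidAlgebra

section Presentations

variable {M : Type*} [Monoid M] {n : ℕ} [NeZero n] {a b : M}

/-- The homomorphism `i ↦ a ^ i` on the cyclic group of order `n` attached to an element `a` with
`a ^ n = 1`, written multiplicatively; `i : ZMod n` is represented by `i.val`. -/
def zmodPowHom (ha : a ^ n = 1) : Multiplicative (ZMod n) →* M where
  toFun x := a ^ x.toAdd.val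
  map_one' := by simp
  map_mul' x y := by rw [toAdd_mul, ZMod.val_add, ← pow_eq_pow_mod _ ha, pow_add]

lemma zmodPowHom_mul_eq (ha : a ^ n = 1) (hab : a * b * a = b) (x : Multiplicative (ZMod n)) :
    zmodPowHom ha x * b = b * zmodPowHom ha x⁻¹ := by
  have hpow (m : ℕ) : a ^ m * b * a ^ m = b := by
    induction m with
    | zero => simp
    | succ m ih =>
      calc a ^ (m + 1) * b * a ^ (m + 1) = a * a ^ m * b * (a ^ m * a) := by
            rw [← pow_succ', ← pow_succ]
        _ = a * (a ^ m * b * a ^ m) * a := by simp only [mul_assoc]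
        _ = b := by rw [ih, hab]
  calc zmodPowHom ha x * b
      = zmodPowHom ha x * b * zmodPowHom ha x * zmodPowHom ha x⁻¹ := by
        rw [mul_assoc _ (zmodPowHom ha x), ← map_mul, mul_inv_cancel, map_one, mul_one]
    _ = b * zmodPowHom ha x⁻¹ := congrArg (· * zmodPowHom ha x⁻¹) (hpow _)

/-- The homomorphism `rⁱ ↦ aⁱ`, `s rⁱ ↦ b aⁱ` on the dihedral group of order `2 n` given by its
presentation. The relation `b a b = a⁻¹` is written `a b a = b`, which makes sense in a monoid. -/
def dihedralHom (ha : a ^ n = 1) (hb : b * b = 1) (hab : a * b * a = b) :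
    DihedralGroup n →* M where
  toFun
    | .r i => zmodPowHom ha (ofAdd i)
    | .sr i => b * zmodPowHom ha (ofAdd i)
  map_one' := map_one _
  map_mul' := by
    have hmul (i j : ZMod n) : zmodPowHom ha (ofAdd i) * zmodPowHom ha (ofAdd j) =
        zmodPowHom ha (ofAdd (i + j)) := by rw [← map_mul, ofAdd_add]
    have hswap (i j : ZMod n) : zmodPowHom ha (ofAdd i) * (b * zmodPowHom ha (ofAdd j)) =
        b * zmodPowHom ha (ofAdd (j - i)) := by
      rw [← mul_assoc, zmodPowHom_mul_eq ha hab, mul_assoc, ← ofAdd_neg, hmul, neg_add_eq_sub]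
    rintro (i | i) (j | j)
    · exact (hmul i j).symm
    · exact (hswap i j).symm
    · exact .trans (congrArg (b * ·) (hmul i j).symm) (mul_assoc ..).symm
    · change zmodPowHom ha (ofAdd (j - i)) =
        b * zmodPowHom ha (ofAdd i) * (b * zmodPowHom ha (ofAdd j))
      rw [mul_assoc, hswap, ← mul_assoc, hb, one_mul]

lemma zmodPowHom_ofAdd_one (ha : a ^ n = 1) : zmodPowHom ha (ofAdd 1) = a := by
  change a ^ (1 : ZMod n).val = a
  rw [ZMod.val_one_eq_one_mod, ← pow_eq_pow_mod _ ha, pow_one]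

lemma dihedralHom_r_one (ha : a ^ n = 1) (hb : b * b = 1) (hab : a * b * a = b) :
    dihedralHom ha hb hab (.r 1) = a := zmodPowHom_ofAdd_one ha

lemma dihedralHom_sr_zero (ha : a ^ n = 1) (hb : b * b = 1) (hab : a * b * a = b) :
    dihedralHom ha hb hab (.sr 0) = b := by
  change b * zmodPowHom ha 1 = b
  rw [map_one, mul_one]

end Presentations

lemma pow_eq_one_of_geom_sum_eq_zero {R : Type*} [Ring R] {x : R} {n : ℕ}
    (h : ∑ i ∈ range n, x ^ i = 0) : x ^ n = 1 := by
  rw [← sub_eq_zero, ← geom_sum_mul, h, zero_mul]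

lemma geom_sum_three_eq_zero {R : Type*} [CommRing R] {x : R} (hx : x ^ 2 + x + 1 = 0) :
    ∑ i ∈ range 3, x ^ i = 0 := by
  simp only [sum_range_succ, range_zero, sum_empty, pow_zero, pow_one]
  linear_combination hx

theorem nonempty_monoidAlgebra_zmod_algEquiv {k B : Type*} [Field k] [Ring B] [Algebra k B]
    {n : ℕ} (hn : (n : k) ≠ 0) {ζ : B} (hζ : ∑ i ∈ range n, ζ ^ i = 0)
    (hgen : Algebra.adjoin k {ζ} = ⊤) (hB : Module.finrank k B + 1 = n) :
    Nonempty (k[Multiplicative (ZMod n)] ≃ₐ[k] k × B) := by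
  have := NeZero.mk hn
  have : NeZero n := .of_neZero_natCast k
  let G := Multiplicative (ZMod n)
  let φ : G →* B := zmodPowHom (pow_eq_one_of_geom_sum_eq_zero hζ)
  have hφ : φ (ofAdd 1) = ζ := zmodPowHom_ofAdd_one _
  have haug : Function.Surjective (MonoidAlgebra.lift k k G 1) :=
    fun x ↦ ⟨single 1 x, by simp⟩
  have hlift : Function.Surjective (MonoidAlgebra.lift k B G φ) :=
    lift_surjective_of_adjoin_eq_top hgen (Set.singleton_subset_iff.mpr ⟨_, hφ⟩)
  have hsurj := prod_surjective_of_geom_sum_eq_zero haug hlift hn (c := of k G (ofAdd 1))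
    (lift_of _ _) (by rwa [lift_of, hφ])
  have : Module.Finite k B := .of_surjective (MonoidAlgebra.lift k B G φ).toLinearMap hlift
  refine nonempty_algEquiv_of_surjective hsurj ?_
  rw [finrank_monoidAlgebra, Module.finrank_prod, Module.finrank_self, add_comm, hB,
    Nat.card_eq_fintype_card, Fintype.card_multiplicative, ZMod.card]

section Matrices

variable {B : Type*} [CommRing B]

/-- The companion matrix of `X ^ 2 - α X + 1`: the matrix of a rotation `r` with
`r + r⁻¹ = α`, with respect to a basis of the form `v, r v`. -/
def rotationMatrix (α : B) : Matrix (Fin 2) (Fin 2) B := !![0, -1; 1, α]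

variable (B) in
/-- The swap of the two coordinates: the reflection generating, together with `rotationMatrix α`,
the two-dimensional representation of a dihedral group. -/
def reflectionMatrix : Matrix (Fin 2) (Fin 2) B := !![0, 1; 1, 0]

lemma reflectionMatrix_mul_self : reflectionMatrix B * reflectionMatrix B = 1 := by
  simp [reflectionMatrix, Matrix.one_fin_two]

lemma rotationMatrix_mul_reflectionMatrix_mul_rotationMatrix (α : B) :
    rotationMatrix α * reflectionMatrix B * rotationMatrix α = reflectionMatrix B := by
  simp [reflectionMatrix, rotationMatrix]

lemma rotationMatrix_sq (α : B) : rotationMatrix α ^ 2 = α • rotationMatrix α - 1 := by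
  simp [rotationMatrix, sq, Matrix.one_fin_two, neg_add_eq_sub]

lemma algebraMap_eq_rotationMatrix_add (α : B) :
    algebraMap B (Matrix (Fin 2) (Fin 2) B) α = rotationMatrix α +
      reflectionMatrix B * rotationMatrix α * reflectionMatrix B := by
  simp [rotationMatrix, reflectionMatrix, Algebra.algebraMap_eq_smul_one, Matrix.one_fin_two]

lemma exists_eq_smul_rotationMatrix_reflectionMatrix {α : B} (hα : IsUnit (4 - α ^ 2))
    (m : Matrix (Fin 2) (Fin 2) B) : ∃ x y z w : B, m = x • 1 + y • rotationMatrix α +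
      z • reflectionMatrix B + w • (reflectionMatrix B * rotationMatrix α) := by
  obtain ⟨u, hu⟩ := hα.exists_left_inv
  -- The Cramer solution of `α y - 2 w = m 1 1 - m 0 0`, `-2 y + α w = m 0 1 - m 1 0`.
  let y := u * (α * (m 0 0 - m 1 1) - 2 * (m 0 1 - m 1 0))
  let w := u * (2 * (m 0 0 - m 1 1) - α * (m 0 1 - m 1 0))
  refine ⟨m 0 0 - w, y, m 1 0 - y, w, ?_⟩
  have h01 : m 0 1 = -y + (m 1 0 - y) + w * α := by
    linear_combination (m 1 0 - m 0 1) * hu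
  have h11 : m 1 1 = m 0 0 - w + y * α - w := by
    linear_combination (m 0 0 - m 1 1) * hu
  rw [Matrix.eta_fin_two m, h01, h11]
  simp [rotationMatrix, reflectionMatrix, Matrix.one_fin_two, sub_eq_add_neg]

lemma adjoin_rotationMatrix_reflectionMatrix {k : Type*} [CommSemiring k] [Algebra k B] {α : B}
    (hgen : Algebra.adjoin k {α} = ⊤) (hα : IsUnit (4 - α ^ 2)) :
    Algebra.adjoin k {rotationMatrix α, reflectionMatrix B} = ⊤ := by
  set S := Algebra.adjoin k {rotationMatrix α, reflectionMatrix B}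
  have hrot : rotationMatrix α ∈ S := Algebra.subset_adjoin (.inl rfl)
  have href : reflectionMatrix B ∈ S := Algebra.subset_adjoin (.inr rfl)
  have hscalar : S.comap (IsScalarTower.toAlgHom k B (Matrix (Fin 2) (Fin 2) B)) = ⊤ := by
    rw [eq_top_iff, ← hgen, Algebra.adjoin_le_iff, Set.singleton_subset_iff]
    change algebraMap B _ α ∈ S
    rw [algebraMap_eq_rotationMatrix_add]
    exact add_mem hrot (mul_mem (mul_mem href hrot) href)
  have hsmul (b : B) {m : Matrix (Fin 2) (Fin 2) B} (hm : m ∈ S) : b • m ∈ S := by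
    have hb : b ∈ S.comap (IsScalarTower.toAlgHom k B (Matrix (Fin 2) (Fin 2) B)) :=
      hscalar ▸ Algebra.mem_top
    exact Algebra.smul_def b m ▸ mul_mem hb hm
  refine eq_top_iff.mpr fun m _ ↦ ?_
  obtain ⟨x, y, z, w, rfl⟩ := exists_eq_smul_rotationMatrix_reflectionMatrix hα m
  exact add_mem (add_mem (add_mem (hsmul x (one_mem S)) (hsmul y hrot)) (hsmul z href))
    (hsmul w (mul_mem href hrot))

end Matrices

lemma geom_sum_five_eq_zero {R A : Type*} [CommRing R] [Ring A] [Algebra R A] {α : R} {x : A}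
    (hα : α ^ 2 + α = 1) (hx : x ^ 2 = α • x - 1) : ∑ i ∈ range 5, x ^ i = 0 := by
  have hx3 : x ^ 3 = -α • x - α • (1 : A) := by
    calc x ^ 3 = (α • x - 1) * x := by rw [pow_succ, hx]
      _ = α • x ^ 2 - x := by rw [sub_mul, one_mul, smul_mul_assoc, ← sq]
      _ = (α ^ 2 - 1) • x - α • (1 : A) := by rw [hx]; module
      _ = _ := by rw [← hα]; module
  have hx4 : x ^ 4 = -x + α • (1 : A) := by
    calc x ^ 4 = (-α • x - α • (1 : A)) * x := by rw [pow_succ, hx3]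
      _ = -α • x ^ 2 - α • x := by rw [sub_mul, smul_mul_assoc, smul_mul_assoc, one_mul, sq]
      _ = -(α ^ 2 + α) • x + α • (1 : A) := by rw [hx]; module
      _ = _ := by rw [hα]; module
  simp only [sum_range_succ, range_zero, sum_empty, pow_zero, pow_one, hx, hx3, hx4]
  module

theorem nonempty_monoidAlgebra_dihedralGroup_algEquiv {k B : Type*} [Field k] [CommRing B]
    [Algebra k B] {n : ℕ} (h2 : (2 : k) ≠ 0) (hn : (n : k) ≠ 0) {α : B}
    (hsum : ∑ i ∈ range n, rotationMatrix α ^ i = 0) (hα : IsUnit (4 - α ^ 2))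
    (hgen : Algebra.adjoin k {α} = ⊤) (hB : 2 * Module.finrank k B + 1 = n) :
    Nonempty (k[DihedralGroup n] ≃ₐ[k] (Fin 2 → k) × Matrix (Fin 2) (Fin 2) B) := by
  have := NeZero.mk hn
  have : NeZero n := .of_neZero_natCast k
  let χ : DihedralGroup n →* (Fin 2 → k) :=
    dihedralHom (a := 1) (b := ![1, -1]) (one_pow n) (by ext i; fin_cases i <;> simp) (by simp)
  let ρ : DihedralGroup n →* Matrix (Fin 2) (Fin 2) B :=
    dihedralHom (pow_eq_one_of_geom_sum_eq_zero hsum) reflectionMatrix_mul_self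
      (rotationMatrix_mul_reflectionMatrix_mul_rotationMatrix α)
  have hρ : ρ (.r 1) = rotationMatrix α := dihedralHom_r_one ..
  have hinj : Function.Injective ![(1 : k), -1] := by
    rw [injective_pair_iff_ne, ne_eq, ← sub_eq_zero, sub_neg_eq_add, one_add_one_eq_two]
    exact h2
  have hχ_surj : Function.Surjective (MonoidAlgebra.lift k _ _ χ) :=
    lift_surjective_of_adjoin_eq_top (adjoin_singleton_eq_top_of_injective hinj)
      (Set.singleton_subset_iff.mpr ⟨.sr 0, dihedralHom_sr_zero ..⟩)
  have hρ_surj : Function.Surjective (MonoidAlgebra.lift k _ _ ρ) :=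
    lift_surjective_of_adjoin_eq_top (adjoin_rotationMatrix_reflectionMatrix hgen hα)
      (Set.pair_subset ⟨.r 1, hρ⟩ ⟨.sr 0, dihedralHom_sr_zero ..⟩)
  have hsurj := prod_surjective_of_geom_sum_eq_zero hχ_surj hρ_surj hn (c := of k _ (.r 1))
    ((lift_of _ _).trans (dihedralHom_r_one ..)) (by rwa [lift_of, hρ])
  have : Module.Finite k (Matrix (Fin 2) (Fin 2) B) :=
    .of_surjective (MonoidAlgebra.lift k _ _ ρ).toLinearMap hρ_surj
  refine nonempty_algEquiv_of_surjective hsurj ?_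
  rw [finrank_monoidAlgebra, Module.finrank_prod, Module.finrank_fin_fun, Module.finrank_matrix,
    DihedralGroup.nat_card, Fintype.card_fin, ← hB]
  ring

theorem nonempty_monoidAlgebra_dihedralGroup_five_algEquiv {k B : Type*} [Field k] [CommRing B]
    [Algebra k B] (h2 : (2 : k) ≠ 0) (h5 : (5 : k) ≠ 0) {α : B} (hα : α ^ 2 + α = 1)
    (hgen : Algebra.adjoin k {α} = ⊤) (hB : Module.finrank k B = 2) :
    Nonempty (k[DihedralGroup 5] ≃ₐ[k] (Fin 2 → k) × Matrix (Fin 2) (Fin 2) B) := by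
  refine nonempty_monoidAlgebra_dihedralGroup_algEquiv h2 (by exact_mod_cast h5)
    (geom_sum_five_eq_zero hα (rotationMatrix_sq α)) ?_ hgen (by rw [hB])
  have h5B : IsUnit (5 : B) := by simpa only [map_ofNat] using h5.isUnit.map (algebraMap k B)
  refine isUnit_of_dvd_unit ⟨2 - α, ?_⟩ h5B
  linear_combination (3 - α) * hα

theorem nonempty_monoidAlgebra_dihedralGroup_five_algEquiv_of_root {k : Type*} [Field k]
    (h2 : (2 : k) ≠ 0) (h5 : (5 : k) ≠ 0) {α : k} (hα : α ^ 2 + α = 1) :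
    Nonempty (k[DihedralGroup 5] ≃ₐ[k] (Fin 2 → k) × (Fin 2 → Matrix (Fin 2) (Fin 2) k)) := by
  have hne : α ≠ -1 - α := fun h ↦ h5 (by linear_combination (2 * α + 1) * h - 4 * hα)
  obtain ⟨e⟩ := nonempty_monoidAlgebra_dihedralGroup_five_algEquiv h2 h5 (B := Fin 2 → k)
    (α := ![α, -1 - α])
    (by ext i; fin_cases i <;> simp <;> linear_combination hα)
    (adjoin_singleton_eq_top_of_injective (injective_pair_iff_ne.mpr hne))
    (Module.finrank_fin_fun k)
  exact ⟨e.trans (AlgEquiv.refl.prodCongr (Matrix.piAlgEquiv k))⟩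

/-- Regrouping of the factors of an iterated product, in which `B` becomes the component `0` of
`Fin (n + 1) → B`. -/
def prodProdPiFinAlgEquiv (k A B C : Type*) [CommSemiring k] [Semiring A] [Algebra k A]
    [Semiring B] [Algebra k B] [Semiring C] [Algebra k C] (n : ℕ) :
    ((A × B) × (C × (Fin n → B))) ≃ₐ[k] A × C × (Fin (n + 1) → B) where
  toFun x := (x.1.1, x.2.1, Fin.cons x.1.2 x.2.2)
  invFun y := ((y.1, y.2.2 0), (y.2.1, Fin.tail y.2.2))
  left_inv _ := rfl
  right_inv y := by simp
  map_add' x y := Prod.ext rfl (Prod.ext rfl (funext (Fin.cases rfl fun _ ↦ rfl)))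
  map_mul' x y := Prod.ext rfl (Prod.ext rfl (funext (Fin.cases rfl fun _ ↦ rfl)))
  commutes' c := Prod.ext rfl (Prod.ext rfl (funext (Fin.cases rfl fun _ ↦ rfl)))

section FiniteField

lemma natCast_ne_zero_of_coprime_card {F : Type*} [Field F] [Fintype F] {n : ℕ}
    (h : n.Coprime (Fintype.card F)) : (n : F) ≠ 0 := by
  have hcop : IsCoprime (n : F) (Fintype.card F) := h.cast
  rw [Nat.cast_card_eq_zero, isCoprime_zero_right] at hcop
  exact hcop.ne_zero

lemma prime_dvd_card_sub_one_of_geom_sum_eq_zero {F : Type*} [Field F] [Fintype F] {ℓ : ℕ}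
    (hℓ : ℓ.Prime) (hℓF : (ℓ : F) ≠ 0) {x : F} (hx : ∑ i ∈ range ℓ, x ^ i = 0) :
    ℓ ∣ Fintype.card F - 1 := by
  have := Fact.mk hℓ
  have hpow : x ^ ℓ = 1 := pow_eq_one_of_geom_sum_eq_zero hx
  have hx1 : x ≠ 1 := by rintro rfl; simp [hℓF] at hx
  have hx0 : x ≠ 0 := by rintro rfl; simp [hℓ.ne_zero] at hpow
  rw [← orderOf_eq_prime hpow hx1]
  exact orderOf_dvd_of_pow_eq_one (FiniteField.pow_card_sub_one_eq_one x hx0)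

variable {F K : Type*} [Field F] [Field K] [Algebra F K]

open Polynomial in
lemma exists_aeval_eq_zero_of_natDegree_eq_two [Finite F] (hK : Module.finrank F K = 2) {f : F[X]}
    (hf : f.natDegree = 2) : ∃ x : K, aeval x f = 0 := by
  have : Module.Finite F K := Module.finite_of_finrank_pos (by omega)
  have : Finite K := Module.finite_of_finite F
  obtain ⟨g, hg, hgf⟩ := exists_irreducible_of_natDegree_ne_zero (f := f) (by omega)
  have := Fact.mk hg
  have hdvd : Module.finrank F (AdjoinRoot g) ∣ Module.finrank F K := by
    rw [hK, (AdjoinRoot.powerBasis hg.ne_zero).finrank, AdjoinRoot.powerBasis_dim]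
    have h1 := hg.natDegree_pos
    have h2 := natDegree_le_of_dvd hgf (by rintro rfl; simp at hf)
    rw [hf] at h2
    interval_cases g.natDegree <;> simp_all
  obtain ⟨φ⟩ := FiniteField.nonempty_algHom_of_finrank_dvd hdvd
  exact ⟨φ (AdjoinRoot.root g), aeval_eq_zero_of_dvd_aeval_eq_zero hgf (by
    rw [aeval_algHom_apply, AdjoinRoot.aeval_eq, AdjoinRoot.mk_self, map_zero])⟩

open Polynomial in
lemma exists_sq_add_mul_add_eq_zero [Finite F] (hK : Module.finrank F K = 2) (b c : F) :
    ∃ x : K, x ^ 2 + algebraMap F K b * x + algebraMap F K c = 0 := by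
  obtain ⟨x, hx⟩ := exists_aeval_eq_zero_of_natDegree_eq_two hK
    (natDegree_quadratic (b := b) (c := c) (one_ne_zero (α := F)))
  exact ⟨x, by simpa using hx⟩

lemma exists_sq_add_self_add_one_eq_zero_notMem_bot [Fintype F] (hK : Module.finrank F K = 2)
    (hq : Fintype.card F % 3 = 2) : ∃ ω : K, ω ∉ (⊥ : Subalgebra F K) ∧ ω ^ 2 + ω + 1 = 0 := by
  obtain ⟨ω, hω⟩ := exists_sq_add_mul_add_eq_zero (K := K) hK 1 1
  rw [map_one, one_mul] at hω
  refine ⟨ω, fun hmem ↦ ?_, hω⟩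
  obtain ⟨c, rfl⟩ := Algebra.mem_bot.mp hmem
  have hc : c ^ 2 + c + 1 = 0 := (algebraMap F K).injective (by simpa using hω)
  have h3 : ((3 : ℕ) : F) ≠ 0 := natCast_ne_zero_of_coprime_card <|
    (Nat.Prime.coprime_iff_not_dvd Nat.prime_three).mpr (by omega)
  have hdvd : 3 ∣ Fintype.card F - 1 :=
    prime_dvd_card_sub_one_of_geom_sum_eq_zero Nat.prime_three h3 (geom_sum_three_eq_zero hc)
  omega

lemma exists_sq_add_self_eq_one_notMem_bot [Fintype F] (hK : Module.finrank F K = 2)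
    (hq : Fintype.card F % 5 = 2 ∨ Fintype.card F % 5 = 3) :
    ∃ α : K, α ∉ (⊥ : Subalgebra F K) ∧ α ^ 2 + α = 1 := by
  obtain ⟨α, hα⟩ := exists_sq_add_mul_add_eq_zero (K := K) hK 1 (-1)
  replace hα : α ^ 2 + α = 1 := by simpa [add_neg_eq_zero] using hα
  refine ⟨α, fun hmem ↦ ?_, hα⟩
  obtain ⟨c, rfl⟩ := Algebra.mem_bot.mp hmem
  -- If `α ∈ F`, then `α = ζ + ζ⁻¹` puts a primitive fifth root of unity `ζ` in `K`.
  obtain ⟨ζ, hζ⟩ := exists_sq_add_mul_add_eq_zero (K := K) hK (-c) 1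
  have : Module.Finite F K := Module.finite_of_finrank_pos (by omega)
  have : Finite K := Module.finite_of_finite F
  have := Fintype.ofFinite K
  have hcard : Fintype.card K % 5 = 4 := by
    rw [Module.card_eq_pow_finrank (K := F), hK, Nat.pow_mod]
    rcases hq with hq | hq <;> rw [hq]
  have h5 : ((5 : ℕ) : K) ≠ 0 := natCast_ne_zero_of_coprime_card <|
    (Nat.Prime.coprime_iff_not_dvd Nat.prime_five).mpr (by omega)
  have hsum : ∑ i ∈ range 5, ζ ^ i = 0 := geom_sum_five_eq_zero hα <| by
    rw [map_neg, map_one] at hζ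
    rw [smul_eq_mul]
    linear_combination hζ
  have hdvd : 5 ∣ Fintype.card K - 1 :=
    prime_dvd_card_sub_one_of_geom_sum_eq_zero Nat.prime_five h5 hsum
  omega

end FiniteField

section Characteristic

variable {F K : Type*} [Field F] [Field K] [Algebra F K]

-- In characteristic `3` the only root of `X ^ 2 + X + 1` is the double root `1`.
lemma three_ne_zero_of_sq_add_self_add_one_eq_zero {ω : K} (hωF : ω ∉ (⊥ : Subalgebra F K))
    (hω : ω ^ 2 + ω + 1 = 0) : (3 : F) ≠ 0 := fun h ↦ hωF <| by
  have h3 : (3 : K) = 0 := by simpa only [map_ofNat, map_zero] using congrArg (algebraMap F K) h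
  have hsq : (ω - 1) ^ 2 = 0 := by linear_combination hω - ω * h3
  rw [sub_eq_zero.mp (pow_eq_zero_iff two_ne_zero |>.mp hsq)]
  exact one_mem _

-- In characteristic `5` the only root of `X ^ 2 + X - 1` is the double root `2`.
lemma five_ne_zero_of_sq_add_self_eq_one {α : K} (hαF : α ∉ (⊥ : Subalgebra F K))
    (hα : α ^ 2 + α = 1) : (5 : F) ≠ 0 := fun h ↦ hαF <| by
  have h5 : (5 : K) = 0 := by simpa only [map_ofNat, map_zero] using congrArg (algebraMap F K) h
  have hsq : (α - 2) ^ 2 = 0 := by linear_combination hα + (1 - α) * h5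
  rw [sub_eq_zero.mp (pow_eq_zero_iff two_ne_zero |>.mp hsq)]
  exact ofNat_mem _ 2

end Characteristic

theorem stmt_19_general {F K : Type*} [Field F] [Field K] [Algebra F K]
    (h2 : (2 : F) ≠ 0) (hK : Module.finrank F K = 2)
    {ω α : K} (hωF : ω ∉ (⊥ : Subalgebra F K)) (hω : ω ^ 2 + ω + 1 = 0)
    (hαF : α ∉ (⊥ : Subalgebra F K)) (hα : α ^ 2 + α = 1) :
    Nonempty (F[Multiplicative (ZMod 3) × DihedralGroup 5] ≃ₐ[F]
      (Fin 2 → F) × (Fin 2 → K) × (Fin 3 → Matrix (Fin 2) (Fin 2) K)) := by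
  have hprime : (Module.finrank F K).Prime := hK ▸ Nat.prime_two
  have h2K : (2 : K) ≠ 0 := by simpa only [map_ofNat] using map_ne_zero (algebraMap F K) |>.mpr h2
  have h3 : (3 : F) ≠ 0 := three_ne_zero_of_sq_add_self_add_one_eq_zero hωF hω
  have h5 : (5 : F) ≠ 0 := five_ne_zero_of_sq_add_self_eq_one hαF hα
  have h5K : (5 : K) ≠ 0 := by simpa only [map_ofNat] using map_ne_zero (algebraMap F K) |>.mpr h5
  obtain ⟨cyclic⟩ := nonempty_monoidAlgebra_zmod_algEquiv (n := 3) (by exact_mod_cast h3)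
    (geom_sum_three_eq_zero hω) (adjoin_singleton_eq_top_of_finrank_prime hprime hωF) (by rw [hK])
  obtain ⟨dihedralF⟩ := nonempty_monoidAlgebra_dihedralGroup_five_algEquiv h2 h5 hα
    (adjoin_singleton_eq_top_of_finrank_prime hprime hαF) hK
  obtain ⟨dihedralK⟩ := nonempty_monoidAlgebra_dihedralGroup_five_algEquiv_of_root h2K h5K hα
  obtain ⟨coeffs⟩ := nonempty_monoidAlgebra_prod_algEquiv F F K (DihedralGroup 5)
  exact ⟨(domCongr F F MulEquiv.prodComm).trans <| (curryAlgEquiv F).trans <|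
    (mapAlgEquiv F _ cyclic).trans <| coeffs.trans <|
    (dihedralF.prodCongr (dihedralK.restrictScalars F)).trans <|
    prodProdPiFinAlgEquiv F _ _ _ 2⟩

/-- For `F` a finite field of characteristic `p > 5` with `q ≡ 23, 17 (mod 30)`,
`F₂` the quadratic extension of `F`, and `G = C₃ × D₁₀`:
`FG ≅ F² ⊕ F₂² ⊕ M₂(F₂)³` as `F`-algebras. -/
theorem stmt_19 (F : Type) [Field F] [Fintype F] (p : ℕ) (hchar : CharP F p) (hp : 5 < p)
    (hq : Fintype.card F % 30 = 23 ∨ Fintype.card F % 30 = 17)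
    (K : Type) [Field K] [Algebra F K] (hK : Module.finrank F K = 2) :
    let G := Multiplicative (ZMod 3) × DihedralGroup 5
    Nonempty (MonoidAlgebra F G ≃ₐ[F]
      ((Fin 2 → F) × (Fin 2 → K) × (Fin 3 → Matrix (Fin 2) (Fin 2) K))) := by
  have h2 : ((2 : ℕ) : F) ≠ 0 := natCast_ne_zero_of_coprime_card <|
    Nat.coprime_two_left.mpr (Nat.odd_iff.mpr (by omega))
  obtain ⟨ω, hωF, hω⟩ := exists_sq_add_self_add_one_eq_zero_notMem_bot hK (by omega)
  obtain ⟨α, hαF, hα⟩ := exists_sq_add_self_eq_one_notMem_bot hK (by omega)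
  exact stmt_19_general (mod_cast h2) hK hωF hω hαF hα
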